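/- arXiv:1907.07019 — 11 statements merged into one kernel-verified Lean document; each statement's English description precedes it below -/
import Mathlib

section
/- π₁ is commensurate to π₀ if and only if (π₀,π₁) satisfies extended Bayesianism and π₀*(S₁) > 0. -/
open MeasureTheory Set ENNReal

/-- The support of a measure `π` on `(Ω, m)`: the intersection of all `m`-measurable
sets of `π`-measure one. -/
def spt {Ω : Type*} (m : MeasurableSpace Ω) (π : @Measure Ω m) : Set Ω :=
  ⋂₀ {E : Set Ω | @MeasurableSet Ω m E ∧ π E = 1}

/-- The outer measure on richer events induced by a measure `π` on `(Ω, m)`: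
`π*(E) = inf {π F : F m-measurable, E ⊆ F}`. -/
noncomputable def outerM {Ω : Type*} (m : MeasurableSpace Ω) (π : @Measure Ω m)
    (E : Set Ω) : ℝ≥0∞ :=
  ⨅ (F : Set Ω) (_ : @MeasurableSet Ω m F ∧ E ⊆ F), π F

/-- Extended Bayesianism: there is a probability measure `π̄` on the finer σ-algebra `m1`
extending `π₀` (EB1) such that, whenever `π₀*(S₁) > 0`, `π̄(S₁) > 0` and `π₁` is the
conditional of `π̄` on `S₁` (EB2). -/
def ExtendedBayesianism {Ω : Type*} (m0 m1 : MeasurableSpace Ω)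
    (π₀ : @Measure Ω m0) (π₁ : @Measure Ω m1) : Prop :=
  ∃ πb : @Measure Ω m1, @IsProbabilityMeasure Ω m1 πb ∧
    (∀ E : Set Ω, @MeasurableSet Ω m0 E → πb E = π₀ E) ∧
    (0 < outerM m0 π₀ (spt m1 π₁) →
      0 < πb (spt m1 π₁) ∧
      ∀ E : Set Ω, @MeasurableSet Ω m1 E →
        π₁ E = πb (E ∩ spt m1 π₁) / πb (spt m1 π₁))

/-- `π₁` is commensurate to `π₀`: for all `E, F ∈ Σ₀` with `E ⊆ S₁`,
(C1) `π₀ F = 0 → π₁ F = 0` and (C2) `π₀ E * π₁ F ≤ π₁ E * π₀ F`. -/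
def Commensurate {Ω : Type*} (m0 m1 : MeasurableSpace Ω)
    (π₀ : @Measure Ω m0) (π₁ : @Measure Ω m1) : Prop :=
  ∀ E F : Set Ω, @MeasurableSet Ω m0 E → @MeasurableSet Ω m0 F → E ⊆ spt m1 π₁ →
    (π₀ F = 0 → π₁ F = 0) ∧ π₀ E * π₁ F ≤ π₁ E * π₀ F

/-- `π₁` is boundedly commensurate to `π₀`: commensurate, and in addition (C3)
`inf {π₀ F / π₁ F : F ∈ Σ₀, π₁ F > 0} > 0`. -/
def BoundedlyCommensurate {Ω : Type*} (m0 m1 : MeasurableSpace Ω)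
    (π₀ : @Measure Ω m0) (π₁ : @Measure Ω m1) : Prop :=
  Commensurate m0 m1 π₀ π₁ ∧
    0 < ⨅ (F : Set Ω) (_ : @MeasurableSet Ω m0 F ∧ 0 < π₁ F), π₀ F / π₁ F

lemma aux_map {Ω : Type*} [Finite Ω] [MeasurableSpace Ω] (S : Set Ω) :
    ∃ f : Ω → Ω, (∀ T : Set Ω, MeasurableSet (f ⁻¹' T)) ∧
      (∀ E : Set Ω, MeasurableSet E → f ⁻¹' E = E) ∧ f ⁻¹' S ⊆ S := by
  classical
  have hat : ∀ x y : Ω, y ∈ measurableAtom x → measurableAtom y = measurableAtom x := by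
    intro x y hy
    apply Subset.antisymm
    · exact measurableAtom_subset (MeasurableSet.measurableAtom_of_countable x) hy
    · by_cases hx : x ∈ measurableAtom y
      · exact measurableAtom_subset (MeasurableSet.measurableAtom_of_countable y) hx
      · have h1 : measurableAtom x ⊆ (measurableAtom y)ᶜ :=
          measurableAtom_subset (MeasurableSet.measurableAtom_of_countable y).compl hx
        exact absurd (mem_measurableAtom_self y) (h1 hy)
  have hg : ∀ A : Set Ω, A.Nonempty → ∃ z : Ω, z ∈ A ∧ (z ∈ S → A ⊆ S) := by
    intro A hA
    by_cases h : A ⊆ S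
    · exact ⟨hA.some, hA.some_mem, fun _ => h⟩
    · obtain ⟨z, hz, hzS⟩ := Set.not_subset.1 h
      exact ⟨z, hz, fun h => absurd h hzS⟩
  rcases isEmpty_or_nonempty Ω with hO | hO
  · exact ⟨id, fun T => by rw [Set.eq_empty_of_isEmpty (id ⁻¹' T)]; exact MeasurableSet.empty,
      fun E _ => rfl, subset_rfl⟩
  choose! g hg using hg
  have hf : ∀ x, g (measurableAtom x) ∈ measurableAtom x ∧
      (g (measurableAtom x) ∈ S → measurableAtom x ⊆ S) :=
    fun x => hg _ ⟨x, mem_measurableAtom_self x⟩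
  refine ⟨fun x => g (measurableAtom x), ?_, ?_, ?_⟩
  · intro T
    have : (fun x => g (measurableAtom x)) ⁻¹' T =
        ⋃ x ∈ (fun x => g (measurableAtom x)) ⁻¹' T, measurableAtom x := by
      ext y
      simp only [mem_preimage, mem_iUnion, exists_prop]
      constructor
      · exact fun h => ⟨y, h, mem_measurableAtom_self y⟩
      · rintro ⟨x, hx, hy⟩
        rwa [hat x y hy]
    rw [this]
    exact (Set.toFinite _).measurableSet_biUnion
      fun x _ => MeasurableSet.measurableAtom_of_countable x
  · intro E hE
    ext x
    constructor
    · intro h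
      by_contra hx
      exact measurableAtom_subset hE.compl hx (hf x).1 h
    · intro h
      exact measurableAtom_subset hE h (hf x).1
  · intro x hx
    exact (hf x).2 hx (mem_measurableAtom_self x)

lemma aux_spt {Ω : Type*} [Finite Ω] [m : MeasurableSpace Ω] (π : Measure Ω)
    [IsProbabilityMeasure π] :
    MeasurableSet (spt m π) ∧ π (spt m π) = 1 ∧
      ∀ E, MeasurableSet E → E ⊆ spt m π → π E = 0 → E = ∅ := by
  have hm : MeasurableSet (spt m π) :=
    MeasurableSet.sInter (Set.toFinite _).countable fun E hE => hE.1
  have h0 : π (spt m π)ᶜ = 0 := by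
    rw [spt, compl_sInter, measure_sUnion_null_iff ((Set.toFinite _).countable)]
    rintro _ ⟨E, hE, rfl⟩
    exact (prob_compl_eq_zero_iff hE.1).2 hE.2
  refine ⟨hm, (prob_compl_eq_zero_iff hm).1 h0, ?_⟩
  intro E hE hES hE0
  have h1 : π Eᶜ = 1 := (prob_compl_eq_one_iff hE).2 hE0
  have h2 : spt m π ⊆ Eᶜ := sInter_subset_of_mem ⟨hE.compl, h1⟩
  ext x
  simp only [mem_empty_iff_false, iff_false]
  exact fun hx => h2 (hES hx) hx

lemma aux_sub {Ω : Type*} [MeasurableSpace Ω] (μ ν : Measure Ω) [IsFiniteMeasure ν]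
    (h : ∀ E, MeasurableSet E → ν E ≤ μ E) : ∃ ρ : Measure Ω, ρ + ν = μ :=
  ⟨μ - ν, Measure.sub_add_cancel_of_le (Measure.le_iff.2 h)⟩

lemma aux_outer {Ω : Type*} [Finite Ω] (m : MeasurableSpace Ω) (π : Measure Ω) (S : Set Ω)
    (h : ∀ F, MeasurableSet F → S ⊆ F → π F ≠ 0) : 0 < outerM m π S := by
  unfold outerM
  rw [iInf_subtype']
  haveI : Nonempty {F : Set Ω // MeasurableSet F ∧ S ⊆ F} :=
    ⟨⟨univ, MeasurableSet.univ, subset_univ _⟩⟩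
  obtain ⟨F, hF⟩ := exists_eq_ciInf_of_finite
    (f := fun F : {F : Set Ω // MeasurableSet F ∧ S ⊆ F} => π F)
  rw [← hF]
  exact pos_iff_ne_zero.2 (h F F.2.1 F.2.2)

/-- Theorem 1: `π₁` is commensurate to `π₀` iff `(π₀, π₁)` satisfies
extended Bayesianism and `π₀*(S₁) > 0`. -/
theorem commensurate_iff_extendedBayesianism {Ω : Type*} [Finite Ω]
    (m0 m1 : MeasurableSpace Ω) (hle : m0 ≤ m1)
    (π₀ : @Measure Ω m0) (π₁ : @Measure Ω m1)
    (h₀ : @IsProbabilityMeasure Ω m0 π₀) (h₁ : @IsProbabilityMeasure Ω m1 π₁) :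
    Commensurate m0 m1 π₀ π₁ ↔
      ExtendedBayesianism m0 m1 π₀ π₁ ∧ 0 < outerM m0 π₀ (spt m1 π₁) := by
  obtain ⟨hSm, hS1, hSe⟩ := @aux_spt Ω _ m1 π₁ h₁
  have hfull : ∀ E, π₁ (E ∩ spt m1 π₁) = π₁ E := by
    intro E
    exact measure_inter_conull ((prob_compl_eq_zero_iff hSm).2 hS1)
  constructor
  · intro hC
    have hC1 : ∀ F, MeasurableSet[m0] F → π₀ F = 0 → π₁ F = 0 := fun F hF =>
      (hC ∅ F (@MeasurableSet.empty _ m0) hF (empty_subset _)).1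
    have hout : 0 < outerM m0 π₀ (spt m1 π₁) := by
      refine @aux_outer Ω _ m0 π₀ _ fun F hF hSF h0 => ?_
      have h2 := measure_mono (μ := π₁) hSF
      rw [hC1 F hF h0, hS1] at h2
      simp at h2
    refine ⟨?_, hout⟩
    -- the minimal ratio
    obtain ⟨l, hl0, hlt, hlle, hlS⟩ : ∃ l : ℝ≥0∞, l ≠ 0 ∧ l ≠ ⊤ ∧
        (∀ F, MeasurableSet[m0] F → l * π₁ F ≤ π₀ F) ∧
        (∀ E, MeasurableSet[m0] E → E ⊆ spt m1 π₁ → π₀ E ≤ l * π₁ E) := by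
      haveI : Nonempty {F : Set Ω // MeasurableSet[m0] F ∧ π₁ F ≠ 0} :=
        ⟨⟨univ, @MeasurableSet.univ _ m0, by rw [measure_univ]; exact one_ne_zero⟩⟩
      obtain ⟨F, hF⟩ := Finite.exists_min
        (fun F : {F : Set Ω // MeasurableSet[m0] F ∧ π₁ F ≠ 0} => π₀ F / π₁ F)
      have hfin : π₀ F.1 ≠ ⊤ := @measure_ne_top Ω m0 π₀ _ _
      refine ⟨π₀ F / π₁ F, ?_, ?_, ?_, ?_⟩
      · exact (ENNReal.div_pos (fun h => F.2.2 (hC1 _ F.2.1 h)) (measure_ne_top _ _)).ne'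
      · exact ENNReal.div_ne_top hfin F.2.2
      · intro G hG
        by_cases h : π₁ G = 0
        · simp [h]
        · exact (ENNReal.le_div_iff_mul_le (Or.inl h) (Or.inl (measure_ne_top _ _))).1
            (hF ⟨G, hG, h⟩)
      · intro E hE hES
        have h2 := (hC E F.1 hE F.2.1 hES).2
        rw [mul_comm, ← mul_div_assoc]
        exact (ENNReal.le_div_iff_mul_le (Or.inl F.2.2) (Or.inl (measure_ne_top _ _))).2 h2
    have htr : ∀ E, MeasurableSet[m0] E → (l • π₁.trim hle) E = l * π₁ E := by
      intro E hE
      rw [Measure.smul_apply, trim_measurableSet_eq hle hE, smul_eq_mul]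
    have hfm : @IsFiniteMeasure Ω m0 (l • π₁.trim hle) := by
      refine @IsFiniteMeasure.mk Ω m0 _ ?_
      rw [htr _ (@MeasurableSet.univ _ m0), measure_univ, mul_one]
      exact hlt.lt_top
    obtain ⟨ρ, hρ⟩ := @aux_sub Ω m0 π₀ (l • π₁.trim hle) hfm
      (fun E hE => by rw [htr E hE]; exact hlle E hE)
    have hρE : ∀ E, MeasurableSet[m0] E → ρ E + l * π₁ E = π₀ E := by
      intro E hE
      rw [← htr E hE, ← hρ]; rfl
    obtain ⟨f, hf1, hf2, hf3⟩ := @aux_map Ω _ m0 (spt m1 π₁)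
    have hfmeas : @Measurable Ω Ω m0 m1 f := fun T _ => hf1 T
    have hmap : ∀ E, MeasurableSet[m1] E → (@Measure.map Ω Ω m0 m1 f ρ) E = ρ (f ⁻¹' E) :=
      fun E hE => @Measure.map_apply Ω Ω m0 m1 ρ f hfmeas E hE
    have hmS : (@Measure.map Ω Ω m0 m1 f ρ) (spt m1 π₁) = 0 := by
      rw [hmap _ hSm]
      have h1 := hρE _ (hf1 (spt m1 π₁))
      have h2 := hlS _ (hf1 (spt m1 π₁)) hf3
      have h3 : l * π₁ (f ⁻¹' spt m1 π₁) ≠ ⊤ := ENNReal.mul_ne_top hlt (measure_ne_top _ _)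
      rw [← h1] at h2
      have h4 : ρ (f ⁻¹' spt m1 π₁) + l * π₁ (f ⁻¹' spt m1 π₁) ≤
        0 + l * π₁ (f ⁻¹' spt m1 π₁) := by rwa [zero_add]
      exact le_antisymm ((ENNReal.add_le_add_iff_right h3).1 h4) (zero_le)
    have hEB1 : ∀ E, MeasurableSet[m0] E →
        (l • π₁ + @Measure.map Ω Ω m0 m1 f ρ) E = π₀ E := by
      intro E hE
      rw [Measure.add_apply, Measure.smul_apply, smul_eq_mul, hmap E (hle E hE), hf2 E hE,
        add_comm, hρE E hE]
    have hbS : ∀ E, (l • π₁ + @Measure.map Ω Ω m0 m1 f ρ) (E ∩ spt m1 π₁) = l * π₁ E := by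
      intro E
      rw [Measure.add_apply, Measure.smul_apply, smul_eq_mul, hfull,
        measure_mono_null inter_subset_right hmS, add_zero]
    have hbS' : (l • π₁ + @Measure.map Ω Ω m0 m1 f ρ) (spt m1 π₁) = l := by
      have := hbS univ
      rwa [univ_inter, measure_univ, mul_one] at this
    refine ⟨l • π₁ + @Measure.map Ω Ω m0 m1 f ρ, ⟨?_⟩, hEB1, fun _ => ⟨?_, ?_⟩⟩
    · rw [hEB1 _ (@MeasurableSet.univ _ m0)]
      exact @measure_univ Ω m0 π₀ _
    · rw [hbS']; exact pos_iff_ne_zero.2 hl0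
    · intro E _
      rw [hbS, hbS', mul_comm, ENNReal.mul_div_cancel_right hl0 hlt]
  · rintro ⟨⟨πb, hb, hb1, hb2⟩, hpos⟩ E F hE hF hES
    obtain ⟨hbpos, hcond⟩ := hb2 hpos
    constructor
    · intro h
      rw [hcond F (hle F hF), measure_mono_null inter_subset_left ((hb1 F hF).trans h),
        ENNReal.zero_div]
    · rw [hcond F (hle F hF), hcond E (hle E hE), inter_eq_self_of_subset_left hES, hb1 E hE,
        ← hb1 F hF, div_eq_mul_inv, div_eq_mul_inv, mul_assoc, mul_comm (_)⁻¹ (πb F)]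
      gcongr
      exact inter_subset_left
end

section
/- Suppose S₁ is completely non-measurable, i.e., every nonempty subset of S₁ fails to belong to Σ₀. Then (π₀,π₁) satisfies extended Bayesianism and π₀*(S₁) > 0 if and only if for all F ∈ Σ₀, π₀(F) = 0 implies π₁(F) = 0. -/
open MeasureTheory Set ENNReal

theorem spt_facts {Ω : Type*} [Finite Ω] (m : MeasurableSpace Ω) (π : Measure Ω)
    [IsProbabilityMeasure π] : MeasurableSet (spt m π) ∧ π (spt m π)ᶜ = 0 := by
  have hm : MeasurableSet (spt m π) :=
    MeasurableSet.sInter (Set.to_countable _) (fun E hE => hE.1)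
  refine ⟨hm, ?_⟩
  unfold spt
  rw [Set.compl_sInter]
  refine (measure_sUnion_null_iff (Set.to_countable _)).2 ?_
  rintro _ ⟨E, ⟨hE, h1⟩, rfl⟩
  exact (prob_compl_eq_zero_iff hE).2 h1

theorem exists_eps {Ω : Type*} [Finite Ω] (m : MeasurableSpace Ω) (π : Measure Ω) :
    ∃ ε : ℝ≥0∞, 0 < ε ∧ ∀ F : Set Ω, π F ≠ 0 → ε ≤ π F := by
  let f : Set Ω → ℝ≥0∞ := fun F => if π F = 0 then ⊤ else π F
  obtain ⟨F, hF⟩ := exists_eq_ciInf_of_finite (f := f)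
  refine ⟨⨅ F, f F, ?_, ?_⟩
  · rw [← hF]
    by_cases h : π F = 0
    · simp [f, h]
    · simpa [f, h] using pos_iff_ne_zero.2 h
  · intro G hG
    refine (iInf_le f G).trans ?_
    simp [f, hG]

theorem exists_retract {Ω : Type*} [Finite Ω] (m0 : MeasurableSpace Ω) (S : Set Ω)
    (hnm : ∀ F : Set Ω, F ⊆ S → F.Nonempty → ¬ MeasurableSet F) :
    ∃ g : Ω → Ω, (∀ B : Set Ω, MeasurableSet (g ⁻¹' B)) ∧ (∀ x, g x ∉ S) ∧
      ∀ E : Set Ω, MeasurableSet E → g ⁻¹' E = E := by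
  have hmA : ∀ x : Ω, MeasurableSet (measurableAtom x) := fun x =>
    MeasurableSet.measurableAtom_of_countable x
  have hne : ∀ A : Set Ω, (∃ x, A = measurableAtom x) → ∃ y, y ∈ A ∧ y ∉ S := by
    rintro _ ⟨x, rfl⟩
    by_contra hcon
    push Not at hcon
    exact hnm _ hcon ⟨x, mem_measurableAtom_self x⟩ (hmA x)
  choose c hc1 hc2 using hne
  have hmem : ∀ x, c (measurableAtom x) ⟨x, rfl⟩ ∈ measurableAtom x := fun x => hc1 _ _
  have hEq : ∀ x y : Ω, y ∈ measurableAtom x → measurableAtom y = measurableAtom x := by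
    intro x y h
    apply subset_antisymm (measurableAtom_subset (hmA x) h)
    by_cases hx : x ∈ measurableAtom y
    · exact measurableAtom_subset (hmA y) hx
    · exact absurd (mem_measurableAtom_self y)
        ((measurableAtom_subset (hmA y).compl hx) h)
  have hconst : ∀ x y : Ω, y ∈ measurableAtom x →
      c (measurableAtom y) ⟨y, rfl⟩ = c (measurableAtom x) ⟨x, rfl⟩ := by
    intro x y h
    congr 1
    exact hEq x y h
  refine ⟨fun x => c (measurableAtom x) ⟨x, rfl⟩, ?_, fun x => hc2 _ _, ?_⟩
  · intro B
    have : (fun x => c (measurableAtom x) ⟨x, rfl⟩) ⁻¹' B =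
        ⋃ x ∈ (fun x => c (measurableAtom x) ⟨x, rfl⟩) ⁻¹' B, measurableAtom x := by
      ext y
      simp only [mem_preimage, mem_iUnion]
      constructor
      · intro h
        exact ⟨y, h, mem_measurableAtom_self y⟩
      · rintro ⟨x, hx, hy⟩
        rw [hconst x y hy]
        exact hx
    rw [this]
    exact MeasurableSet.biUnion (Set.to_countable _) (fun x _ => hmA x)
  · intro E hE
    ext x
    simp only [mem_preimage]
    constructor
    · intro h
      by_contra hx
      exact measurableAtom_subset hE.compl hx (hmem x) h
    · intro h
      exact measurableAtom_subset hE h (hmem x)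

/-- Corollary 1: if `S₁` is completely non-measurable (no nonempty subset of
`S₁` belongs to `Σ₀`), then `(π₀, π₁)` satisfies extended Bayesianism with `π₀*(S₁) > 0`
iff absolute continuity (C1) holds. -/
theorem extendedBayesianism_iff_absCont_of_completelyNonMeasurable {Ω : Type*} [Finite Ω]
    (m0 m1 : MeasurableSpace Ω) (hle : m0 ≤ m1)
    (π₀ : @Measure Ω m0) (π₁ : @Measure Ω m1)
    (h₀ : @IsProbabilityMeasure Ω m0 π₀) (h₁ : @IsProbabilityMeasure Ω m1 π₁)
    (hnm : ∀ F : Set Ω, F ⊆ spt m1 π₁ → F.Nonempty → ¬ @MeasurableSet Ω m0 F) :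
    (ExtendedBayesianism m0 m1 π₀ π₁ ∧ 0 < outerM m0 π₀ (spt m1 π₁)) ↔
      (∀ F : Set Ω, @MeasurableSet Ω m0 F → π₀ F = 0 → π₁ F = 0) := by
  obtain ⟨hS, hS0⟩ := spt_facts m1 π₁
  constructor
  · rintro ⟨⟨πb, hpb, hext, hc⟩, hpos⟩ F hF hF0
    obtain ⟨-, h2⟩ := hc hpos
    rw [h2 F (hle F hF)]
    have : πb (F ∩ spt m1 π₁) = 0 :=
      measure_mono_null inter_subset_left ((hext F hF).trans hF0)
    rw [this, ENNReal.zero_div]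
  · intro hac
    have hS1 : π₁ (spt m1 π₁) = 1 := (prob_compl_eq_zero_iff hS).1 hS0
    obtain ⟨ε, hε, hεF⟩ := exists_eps m0 π₀
    have hε1 : ε ≤ 1 := by
      have := hεF univ (by rw [h₀.measure_univ]; exact one_ne_zero)
      rwa [h₀.measure_univ] at this
    have hεt : ε ≠ ⊤ := ne_top_of_le_ne_top one_ne_top hε1
    refine ⟨?_, ?_⟩
    · obtain ⟨g, hgm, hgS, hgE⟩ := exists_retract m0 (spt m1 π₁) hnm
      have hgmeas : @Measurable Ω Ω m0 m1 g := fun B _ => hgm B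
      let ν : @Measure Ω m0 := ε • π₁.trim hle
      have hνapp : ∀ E, MeasurableSet[m0] E → ν E = ε * π₁ E := by
        intro E hE
        rw [← trim_measurableSet_eq hle hE]
        rfl
      have hνle : ν ≤ π₀ := by
        refine (@Measure.le_iff Ω m0 _ _).2 ?_
        intro E hE
        rw [hνapp E hE]
        by_cases h : π₀ E = 0
        · rw [hac E hE h, mul_zero]; exact zero_le
        · calc ε * π₁ E ≤ ε * 1 := by gcongr; exact prob_le_one
            _ = ε := mul_one _
            _ ≤ π₀ E := hεF E h
      have hνfin : @IsFiniteMeasure Ω m0 ν := by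
        refine @IsFiniteMeasure.mk Ω m0 ν ?_
        exact (hνle univ).trans_lt (@measure_lt_top Ω m0 π₀ _ univ)
      let ρ : @Measure Ω m1 := @Measure.map Ω Ω m0 m1 g (π₀ - ν)
      have hρS : ρ (spt m1 π₁) = 0 := by
        have h1 : ρ (spt m1 π₁) = _ := @Measure.map_apply Ω Ω m0 m1 (π₀ - ν) g hgmeas _ hS
        rw [h1]
        have h2 : g ⁻¹' (spt m1 π₁) = ∅ := by
          ext x
          simpa using hgS x
        rw [h2]
        exact @measure_empty Ω _ _ _ _
      have hρE : ∀ E, MeasurableSet[m0] E → ρ E = π₀ E - ε * π₁ E := by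
        intro E hE
        have h1 : ρ E = _ := @Measure.map_apply Ω Ω m0 m1 (π₀ - ν) g hgmeas _ (hle E hE)
        rw [h1, hgE E hE, @Measure.sub_apply Ω m0 π₀ ν E hνfin hE hνle, hνapp E hE]
      let πb : @Measure Ω m1 := ε • π₁ + ρ
      have hπb : ∀ E, πb E = ε * π₁ E + ρ E := fun E => rfl
      have hext : ∀ E, MeasurableSet[m0] E → πb E = π₀ E := by
        intro E hE
        rw [hπb, hρE E hE]
        apply add_tsub_cancel_of_le
        rw [← hνapp E hE]
        exact hνle E
      have hbS : πb (spt m1 π₁) = ε := by rw [hπb, hρS, hS1, mul_one, add_zero]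
      refine ⟨πb, ⟨?_⟩, hext, fun _ => ⟨?_, ?_⟩⟩
      · rw [hext univ (@MeasurableSet.univ Ω m0)]
        exact h₀.measure_univ
      · rw [hbS]; exact hε
      · intro E hE
        have hES : π₁ (E ∩ spt m1 π₁) = π₁ E := by
          exact measure_inter_conull hS0
        rw [hbS, hπb, measure_mono_null inter_subset_right hρS, hES, add_zero, mul_comm,
          ENNReal.mul_div_cancel_right hε.ne' hεt]
    · refine hε.trans_le ?_
      unfold outerM
      refine le_iInf fun F => le_iInf fun hF => hεF F ?_
      intro h
      have := hac F hF.1 h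
      have h2 := measure_mono_null hF.2 this
      rw [hS1] at h2
      exact one_ne_zero h2
end

section
/- Suppose S₁ = S₀, where S₀ is the support of π₀ and S₁ the support of π₁. Then (π₀,π₁) satisfies extended Bayesianism if and only if π₁(E) = π₀(E) for all E ∈ Σ₀, i.e., π₁ is an extension of π₀ to Σ₁. -/
open MeasureTheory Set ENNReal

theorem spt_meas_aux {Ω : Type*} [Finite Ω] (m : MeasurableSpace Ω) (π : @Measure Ω m)
    (h : @IsProbabilityMeasure Ω m π) :
    @MeasurableSet Ω m (spt m π) ∧ π (spt m π) = 1 := by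
  have hfin : {E : Set Ω | @MeasurableSet Ω m E ∧ π E = 1}.Finite := Set.toFinite _
  have hm : MeasurableSet (spt m π) :=
    MeasurableSet.sInter hfin.countable (fun E hE => hE.1)
  refine ⟨hm, ?_⟩
  rw [← prob_compl_eq_zero_iff hm]
  unfold spt
  rw [Set.compl_sInter, measure_sUnion_null_iff (hfin.image _).countable]
  rintro _ ⟨E, hE, rfl⟩
  exact (prob_compl_eq_zero_iff hE.1).2 hE.2

theorem inter_spt_aux {Ω : Type*} [Finite Ω] (m : MeasurableSpace Ω) (π : @Measure Ω m)
    (h : @IsProbabilityMeasure Ω m π) (E : Set Ω) :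
    π (E ∩ spt m π) = π E := by
  obtain ⟨hm, h1⟩ := spt_meas_aux m π h
  rw [Set.inter_comm]
  exact Measure.measure_inter_eq_of_ae ((prob_compl_eq_zero_iff hm).2 h1)

/-- Example 3: if `S₁ = S₀`, then `(π₀, π₁)` satisfies extended Bayesianism
iff `π₁` is an extension of `π₀` to `Σ₁`. -/
theorem extendedBayesianism_iff_extension_of_support_eq {Ω : Type*} [Finite Ω]
    (m0 m1 : MeasurableSpace Ω) (hle : m0 ≤ m1)
    (π₀ : @Measure Ω m0) (π₁ : @Measure Ω m1)
    (h₀ : @IsProbabilityMeasure Ω m0 π₀) (h₁ : @IsProbabilityMeasure Ω m1 π₁)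
    (hspt : spt m1 π₁ = spt m0 π₀) :
    ExtendedBayesianism m0 m1 π₀ π₁ ↔
      ∀ E : Set Ω, @MeasurableSet Ω m0 E → π₁ E = π₀ E := by
  constructor
  · rintro ⟨πb, hb, hext, hcond⟩ E hE
    obtain ⟨hm, hS⟩ := spt_meas_aux m0 π₀ h₀
    have hpos : 0 < outerM m0 π₀ (spt m1 π₁) := by
      refine lt_of_lt_of_le zero_lt_one ?_
      unfold outerM
      refine le_iInf₂ fun F hF => ?_
      rw [← hS, ← hspt]
      exact @measure_mono Ω _ _ _ π₀ _ _ hF.2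
    obtain ⟨-, hc⟩ := hcond hpos
    rw [hc E (hle E hE), hspt, hext _ hm, hS, div_one,
      hext _ (@MeasurableSet.inter Ω m0 _ _ hE hm), inter_spt_aux m0 π₀ h₀]
  · intro hext
    obtain ⟨hm, hS⟩ := spt_meas_aux m1 π₁ h₁
    refine ⟨π₁, h₁, hext, fun _ => ⟨by rw [hS]; exact zero_lt_one, fun E hE => ?_⟩⟩
    rw [hS, div_one, inter_spt_aux m1 π₁ h₁]
end

section
/- Suppose (π₀,π₁) satisfies extended Bayesianism and π₀*(S₁) > 0. Let a, b ≥ 0 be real numbers and E, F ∈ Σ₀ be such that a·π₀(F) ≥ b·π₀(E) and b·π₁(E) > a·π₁(F). Then the set G = F ∩ S₁ᶜ belongs to Σ₁, satisfies G ⊆ F, π₁(G) = 0, and π₀*(G) > 0 (equivalently, every H ∈ Σ₀ with G ⊆ H has π₀(H) > 0); that is, F contains a discarded sub-event. -/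
open MeasureTheory Set ENNReal

/-- under extended Bayesianism with `π₀*(S₁) > 0`, a preference reversal
over bets (`a·π₀ F ≥ b·π₀ E` but `b·π₁ E > a·π₁ F` for some stakes `a, b ≥ 0`) implies
`G = F ∩ S₁ᶜ` is a discarded sub-event of `F`: `G ∈ Σ₁`, `G ⊆ F`, `π₁ G = 0` and
`π₀* G > 0` (equivalently every `H ∈ Σ₀` containing `G` has `π₀ H > 0`). -/
theorem reversal_implies_discarded {Ω : Type*} [Finite Ω]
    (m0 m1 : MeasurableSpace Ω) (hle : m0 ≤ m1)
    (π₀ : @Measure Ω m0) (π₁ : @Measure Ω m1)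
    (h₀ : @IsProbabilityMeasure Ω m0 π₀) (h₁ : @IsProbabilityMeasure Ω m1 π₁)
    (hEB : ExtendedBayesianism m0 m1 π₀ π₁) (hpos : 0 < outerM m0 π₀ (spt m1 π₁))
    (a b : NNReal) (E F : Set Ω) (hE : @MeasurableSet Ω m0 E) (hF : @MeasurableSet Ω m0 F)
    (h0 : (b : ℝ≥0∞) * π₀ E ≤ (a : ℝ≥0∞) * π₀ F)
    (h1 : (a : ℝ≥0∞) * π₁ F < (b : ℝ≥0∞) * π₁ E) :
    @MeasurableSet Ω m1 (F ∩ (spt m1 π₁)ᶜ) ∧ F ∩ (spt m1 π₁)ᶜ ⊆ F ∧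
      π₁ (F ∩ (spt m1 π₁)ᶜ) = 0 ∧ 0 < outerM m0 π₀ (F ∩ (spt m1 π₁)ᶜ) ∧
      (∀ H : Set Ω, @MeasurableSet Ω m0 H → F ∩ (spt m1 π₁)ᶜ ⊆ H → 0 < π₀ H) := by
  obtain ⟨πb, hb, hext, hc⟩ := hEB
  obtain ⟨hSpos, hcond⟩ := hc hpos
  have hS : @MeasurableSet Ω m1 (spt m1 π₁) :=
    @MeasurableSet.sInter Ω m1 _ (Set.toFinite _).countable (fun t ht => ht.1)
  have hF1 := hle F hF
  have hE1 := hle E hE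
  have hG : @MeasurableSet Ω m1 (F ∩ (spt m1 π₁)ᶜ) :=
    @MeasurableSet.inter Ω m1 _ _ hF1 (@MeasurableSet.compl Ω _ m1 hS)
  have hGpos : 0 < πb (F ∩ (spt m1 π₁)ᶜ) := by
    by_contra hn
    have hz : πb (F ∩ (spt m1 π₁)ᶜ) = 0 := by simpa using hn
    have hFS : πb F ≤ πb (F ∩ spt m1 π₁) := by
      calc πb F = πb ((F ∩ spt m1 π₁) ∪ (F ∩ (spt m1 π₁)ᶜ)) := by
            rw [Set.inter_union_compl]
        _ ≤ πb (F ∩ spt m1 π₁) + πb (F ∩ (spt m1 π₁)ᶜ) := measure_union_le _ _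
        _ = πb (F ∩ spt m1 π₁) := by rw [hz, add_zero]
    refine absurd h1 (not_lt.mpr ?_)
    rw [hcond F hF1, hcond E hE1, ← mul_div_assoc, ← mul_div_assoc]
    refine ENNReal.div_le_div_right ?_ _
    calc (b : ℝ≥0∞) * πb (E ∩ spt m1 π₁) ≤ b * πb E :=
          mul_le_mul_right (measure_mono Set.inter_subset_left) _
      _ = b * π₀ E := by rw [hext E hE]
      _ ≤ a * π₀ F := h0
      _ = a * πb F := by rw [hext F hF]
      _ ≤ a * πb (F ∩ spt m1 π₁) := mul_le_mul_right hFS _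
  have hH : ∀ H : Set Ω, @MeasurableSet Ω m0 H → F ∩ (spt m1 π₁)ᶜ ⊆ H →
      πb (F ∩ (spt m1 π₁)ᶜ) ≤ π₀ H := by
    intro H hHm hs
    rw [← hext H hHm]
    exact measure_mono hs
  refine ⟨hG, Set.inter_subset_left, ?_, ?_, fun H hHm hs => hGpos.trans_le (hH H hHm hs)⟩
  · rw [hcond _ hG, Set.inter_assoc, Set.compl_inter_self, Set.inter_empty]
    simp
  · exact hGpos.trans_le (le_iInf₂ fun H h => hH H h.1 h.2)
end

section
/- Suppose that for all real numbers a, b ≥ 0 and all E, F ∈ Σ₀, if a·π₀(F) ≥ b·π₀(E) and b·π₁(E) > a·π₁(F), then there exists G ∈ Σ₁ with G ⊆ F, π₁(G) = 0, and π₀*(G) > 0. Then π₁ is commensurate to π₀. -/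
open MeasureTheory Set ENNReal

/-- if every preference reversal over bets implies the existence of a
discarded sub-event (`G ∈ Σ₁`, `G ⊆ F`, `π₁ G = 0`, `π₀* G > 0`), then `π₁` is
commensurate to `π₀`. -/
theorem commensurate_of_extension_consistent {Ω : Type*} [Finite Ω]
    (m0 m1 : MeasurableSpace Ω) (hle : m0 ≤ m1)
    (π₀ : @Measure Ω m0) (π₁ : @Measure Ω m1)
    (h₀ : @IsProbabilityMeasure Ω m0 π₀) (h₁ : @IsProbabilityMeasure Ω m1 π₁)
    (hcons : ∀ (a b : NNReal) (E F : Set Ω),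
      @MeasurableSet Ω m0 E → @MeasurableSet Ω m0 F →
      (b : ℝ≥0∞) * π₀ E ≤ (a : ℝ≥0∞) * π₀ F →
      (a : ℝ≥0∞) * π₁ F < (b : ℝ≥0∞) * π₁ E →
      ∃ G : Set Ω, @MeasurableSet Ω m1 G ∧ G ⊆ F ∧ π₁ G = 0 ∧ 0 < outerM m0 π₀ G) :
    Commensurate m0 m1 π₀ π₁ := by
  have hempty : outerM m0 π₀ ∅ = 0 := by
    apply le_antisymm _ zero_le
    unfold outerM
    exact (iInf₂_le ∅ ⟨@MeasurableSet.empty Ω m0, subset_rfl⟩).trans (by simp)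
  intro E F hE hF hES
  constructor
  · intro hF0
    by_contra hne
    obtain ⟨G, -, hGF, -, hGo⟩ := hcons 0 1 F ∅ hF (@MeasurableSet.empty Ω m0)
      (by simp [hF0]) (by simpa using pos_iff_ne_zero.mpr hne)
    rw [subset_empty_iff.mp hGF, hempty] at hGo
    exact lt_irrefl _ hGo
  · by_contra hlt
    rw [not_le] at hlt
    have hE' : ((π₀ E).toNNReal : ℝ≥0∞) = π₀ E := ENNReal.coe_toNNReal (measure_ne_top _ _)
    have hF' : ((π₀ F).toNNReal : ℝ≥0∞) = π₀ F := ENNReal.coe_toNNReal (measure_ne_top _ _)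
    obtain ⟨G, hGm, hGE, hG0, hGo⟩ := hcons (π₀ F).toNNReal (π₀ E).toNNReal F E hF hE
      (by rw [hE', hF', mul_comm]) (by rw [hE', hF', mul_comm]; exact hlt)
    have hc : π₁ Gᶜ = 1 := (prob_compl_eq_one_iff hGm).mpr hG0
    have hG : G = ∅ := by
      apply eq_empty_of_forall_notMem
      intro x hx
      exact hES (hGE hx) Gᶜ ⟨hGm.compl, hc⟩ hx
    rw [hG, hempty] at hGo
    exact lt_irrefl _ hGo
end

section
/- Let Ω = ℕ × {A,B}, let Σ₀ be the σ-algebra generated by the sets Eₙ = {n} × {A,B} for n ∈ ℕ, and let Σ₁ be the powerset of Ω. Let π₀ be the probability measure on Σ₀ with π₀(E₀) = 1/2 and π₀(Eₙ) = 3⁻ⁿ for n ≥ 1, and let π₁ be the probability measure on Σ₁ with π₁({(n,A)}) = 2⁻ⁿ for n ≥ 1 and π₁({(0,A)}) = π₁({(n,B)}) = 0 for all n. Then π₁ is commensurate to π₀ (conditions C1 and C2 hold), but (π₀,π₁) does not satisfy extended Bayesianism. -/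
open MeasureTheory Set ENNReal

/-- The σ-algebra on `ℕ × Bool` generated by the sets `Eₙ = {n} × {A, B}`
(`A := true`, `B := false`). -/
def sigmaEx : MeasurableSpace (ℕ × Bool) :=
  MeasurableSpace.generateFrom {E : Set (ℕ × Bool) | ∃ n : ℕ, E = {n} ×ˢ (Set.univ : Set Bool)}

theorem sigmaEx_sat (E : Set (ℕ × Bool)) (hE : @MeasurableSet (ℕ × Bool) sigmaEx E) :
    ∀ (n : ℕ) (b c : Bool), (n, b) ∈ E → (n, c) ∈ E := by
  have key : ∀ (n : ℕ) (b c : Bool), (n, b) ∈ E ↔ (n, c) ∈ E := by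
    refine MeasurableSpace.generateFrom_induction
      {E : Set (ℕ × Bool) | ∃ n : ℕ, E = {n} ×ˢ (Set.univ : Set Bool)}
      (fun E _ => ∀ (n : ℕ) (b c : Bool), (n, b) ∈ E ↔ (n, c) ∈ E) ?_ ?_ ?_ ?_ E hE
    · rintro t ⟨m, rfl⟩ _ n b c
      simp
    · intro n b c
      simp
    · intro t _ ih n b c
      exact not_congr (ih n b c)
    · intro s _ ih n b c
      simp only [Set.mem_iUnion]
      exact exists_congr fun i => ih i n b c
  exact fun n b c h => (key n b c).1 h

theorem sigmaEx_col_subset (E : Set (ℕ × Bool)) (hE : @MeasurableSet (ℕ × Bool) sigmaEx E)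
    (n : ℕ) (b : Bool) (h : (n, b) ∈ E) : ({n} ×ˢ (Set.univ : Set Bool)) ⊆ E := by
  rintro ⟨m, c⟩ hm
  simp only [Set.mem_prod, Set.mem_singleton_iff, Set.mem_univ, and_true] at hm
  subst hm
  exact sigmaEx_sat E hE _ b c h

theorem sigmaEx_col_meas (n : ℕ) :
    @MeasurableSet (ℕ × Bool) sigmaEx ({n} ×ˢ (Set.univ : Set Bool)) :=
  MeasurableSpace.measurableSet_generateFrom ⟨n, rfl⟩

/-- Example 4: with `Ω = ℕ × {A, B}`, `Σ₀` generated by the columns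
`Eₙ = {n} × {A, B}`, `Σ₁` the powerset, `π₀ E₀ = 1/2`, `π₀ Eₙ = 3⁻ⁿ` for `n ≥ 1`,
`π₁ {(n,A)} = 2⁻ⁿ` for `n ≥ 1` and `π₁ {(0,A)} = π₁ {(n,B)} = 0`, the measure `π₁` is
commensurate to `π₀` but `(π₀, π₁)` does not satisfy extended Bayesianism. -/
theorem commensurate_not_extendedBayesianism_example
    (π₀ : @Measure (ℕ × Bool) sigmaEx)
    (h₀ : @IsProbabilityMeasure (ℕ × Bool) sigmaEx π₀)
    (π₁ : @Measure (ℕ × Bool) ⊤)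
    (h₁ : @IsProbabilityMeasure (ℕ × Bool) ⊤ π₁)
    (h₀0 : π₀ ({0} ×ˢ (Set.univ : Set Bool)) = 1 / 2)
    (h₀n : ∀ n : ℕ, 1 ≤ n → π₀ ({n} ×ˢ (Set.univ : Set Bool)) = (3 : ℝ≥0∞)⁻¹ ^ n)
    (h₁A0 : π₁ {((0 : ℕ), true)} = 0)
    (h₁An : ∀ n : ℕ, 1 ≤ n → π₁ {((n : ℕ), true)} = (2 : ℝ≥0∞)⁻¹ ^ n)
    (h₁B : ∀ n : ℕ, π₁ {((n : ℕ), false)} = 0) :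
    Commensurate sigmaEx ⊤ π₀ π₁ ∧ ¬ ExtendedBayesianism sigmaEx ⊤ π₀ π₁ := by
  have hpos : ∀ n : ℕ, 0 < π₀ ({n} ×ˢ (Set.univ : Set Bool)) := by
    intro n
    rcases Nat.eq_zero_or_pos n with rfl | hn
    · rw [h₀0]; simp
    · rw [h₀n n hn]
      exact ENNReal.pow_pos (by simp) n
  have hF : ∀ F : Set (ℕ × Bool), @MeasurableSet _ sigmaEx F → ∀ n b, (n, b) ∈ F →
      π₀ ({n} ×ˢ (Set.univ : Set Bool)) ≤ π₀ F := fun F hF n b h =>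
    @measure_mono _ _ _ _ π₀ _ _ (sigmaEx_col_subset F hF n b h)
  have hB : ∀ n, (n, false) ∉ spt ⊤ π₁ := by
    intro n hn
    have hm : @MeasurableSet (ℕ × Bool) ⊤ {((n : ℕ), false)} := trivial
    have := hn ({((n : ℕ), false)}ᶜ) ⟨trivial, (@prob_compl_eq_one_iff _ ⊤ π₁ _ h₁ hm).2 (h₁B n)⟩
    exact this rfl
  constructor
  · intro E F hE hFm hES
    constructor
    · intro h
      have : F = ∅ := by
        rw [Set.eq_empty_iff_forall_notMem]
        rintro ⟨n, b⟩ hnb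
        have h1 := hF F hFm n b hnb
        rw [h] at h1
        exact absurd (hpos n) (not_lt.2 h1)
      rw [this]; exact @measure_empty _ _ _ _ π₁
    · have : E = ∅ := by
        rw [Set.eq_empty_iff_forall_notMem]
        rintro ⟨n, b⟩ hnb
        exact hB n (hES (sigmaEx_sat E hE n b false hnb))
      subst this
      have h2 : π₀ ∅ = 0 := @measure_empty _ _ _ _ π₀
      rw [h2, zero_mul]
      exact zero_le
  · rintro ⟨πb, hb, hext, hcond⟩
    have h1S : ((1 : ℕ), true) ∈ spt ⊤ π₁ := by
      rintro E ⟨hE, hE1⟩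
      by_contra hne
      have h2 := (@prob_compl_eq_zero_iff _ ⊤ π₁ _ h₁ hE).2 hE1
      have h3 : π₁ {((1 : ℕ), true)} ≤ π₁ Eᶜ :=
        @measure_mono _ _ _ _ π₁ _ _ (Set.singleton_subset_iff.2 hne)
      rw [h2, h₁An 1 le_rfl] at h3
      simp at h3
    have hout : 0 < outerM sigmaEx π₀ (spt ⊤ π₁) := by
      refine lt_of_lt_of_le (hpos 1) ?_
      refine le_iInf₂ fun F hFF => ?_
      exact hF F hFF.1 1 true (hFF.2 h1S)
    obtain ⟨hc, hE⟩ := hcond hout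
    have hle : πb (spt ⊤ π₁) ≤ 1 := @prob_le_one _ ⊤ πb (@instIsZeroOrProbabilityMeasureOfIsProbabilityMeasure _ ⊤ πb hb) _
    generalize hcdef : πb (spt ⊤ π₁) = c at hc hE hle
    have hct : c ≠ ⊤ := ne_top_of_le_ne_top ENNReal.one_ne_top hle
    have hb1 : ∀ n : ℕ, 1 ≤ n → (2 : ℝ≥0∞)⁻¹ ^ n * c ≤ (3 : ℝ≥0∞)⁻¹ ^ n := by
      intro n hn
      have h2 := hE {((n : ℕ), true)} trivial
      rw [h₁An n hn] at h2
      rw [h2, ENNReal.div_mul_cancel hc.ne' hct, ← h₀n n hn, ← hext _ (sigmaEx_col_meas n)]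
      refine @measure_mono _ _ _ _ πb _ _ ?_
      rintro x ⟨hx, _⟩
      rw [Set.mem_singleton_iff] at hx
      subst hx
      simp
    have hcr : 0 < c.toReal := ENNReal.toReal_pos hc.ne' hct
    have hr : ∀ n : ℕ, 1 ≤ n → c.toReal ≤ (2 / 3 : ℝ) ^ n := by
      intro n hn
      have h2 := ENNReal.toReal_mono (by simp) (hb1 n hn)
      simp only [ENNReal.toReal_mul, ENNReal.toReal_pow, ENNReal.toReal_inv,
        ENNReal.toReal_ofNat] at h2
      rw [div_eq_mul_inv, mul_pow]
      calc c.toReal = 2 ^ n * ((2 : ℝ)⁻¹ ^ n * c.toReal) := by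
            rw [← mul_assoc, ← mul_pow]; norm_num
        _ ≤ _ := by gcongr
    obtain ⟨n, hn⟩ := exists_pow_lt_of_lt_one hcr (show (2 / 3 : ℝ) < 1 by norm_num)
    have h3 := hr (n + 1) (by omega)
    have h4 : (2 / 3 : ℝ) ^ (n + 1) ≤ (2 / 3 : ℝ) ^ n :=
      pow_le_pow_of_le_one (by norm_num) (by norm_num) (Nat.le_succ n)
    linarith
end

section
/- Suppose (π₀,π₁) satisfies extended Bayesianism with witness π̄ and π₀*(S₁) > 0. Then for every F ∈ Σ₀ with π₁(F) > 0, π₀(F)/π₁(F) ≥ π̄(S₁) > 0; consequently inf{π₀(F)/π₁(F) : F ∈ Σ₀, π₁(F) > 0} > 0. -/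
open MeasureTheory Set ENNReal

/-- if `(π₀, π₁)` satisfies extended Bayesianism with witness `π̄` and
`π₀*(S₁) > 0`, then for every `F ∈ Σ₀` with `π₁ F > 0`, `π₀ F / π₁ F ≥ π̄ S₁ > 0`;
consequently `inf {π₀ F / π₁ F : F ∈ Σ₀, π₁ F > 0} > 0`. -/
theorem witness_bounds_ratio {Ω : Type*} [Countable Ω]
    (m0 m1 : MeasurableSpace Ω) (hle : m0 ≤ m1)
    (π₀ : @Measure Ω m0) (π₁ : @Measure Ω m1)
    (h₀ : @IsProbabilityMeasure Ω m0 π₀) (h₁ : @IsProbabilityMeasure Ω m1 π₁)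
    (πb : @Measure Ω m1) (hb : @IsProbabilityMeasure Ω m1 πb)
    (hEB1 : ∀ E : Set Ω, @MeasurableSet Ω m0 E → πb E = π₀ E)
    (hEB2 : 0 < outerM m0 π₀ (spt m1 π₁) →
      0 < πb (spt m1 π₁) ∧
      ∀ E : Set Ω, @MeasurableSet Ω m1 E →
        π₁ E = πb (E ∩ spt m1 π₁) / πb (spt m1 π₁))
    (hpos : 0 < outerM m0 π₀ (spt m1 π₁)) :
    (∀ F : Set Ω, @MeasurableSet Ω m0 F → 0 < π₁ F → πb (spt m1 π₁) ≤ π₀ F / π₁ F) ∧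
      0 < πb (spt m1 π₁) ∧
      0 < ⨅ (F : Set Ω) (_ : @MeasurableSet Ω m0 F ∧ 0 < π₁ F), π₀ F / π₁ F := by
  obtain ⟨hS, hE⟩ := hEB2 hpos
  have key : ∀ F : Set Ω, @MeasurableSet Ω m0 F → 0 < π₁ F →
      πb (spt m1 π₁) ≤ π₀ F / π₁ F := by
    intro F hF hF1
    have hfin : πb (spt m1 π₁) ≠ ⊤ := measure_ne_top πb _
    rw [ENNReal.le_div_iff_mul_le (Or.inl hF1.ne') (Or.inl (measure_ne_top π₁ F)),
      hE F (hle F hF), ENNReal.mul_div_cancel hS.ne' hfin, ← hEB1 F hF]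
    exact measure_mono inter_subset_left
  refine ⟨key, hS, lt_of_lt_of_le hS ?_⟩
  exact le_iInf fun F => le_iInf fun h => key F h.1 h.2
end

section
/- Suppose π₁ is commensurate to π₀ and there exists a nonempty E ∈ Σ₀ with E ⊆ S₁. Then π₁(E) > 0 and π₀(E) > 0, and for every F ∈ Σ₀ with π₁(F) > 0 one has 0 < π₀(E)/π₁(E) ≤ π₀(F)/π₁(F); hence inf{π₀(F)/π₁(F) : F ∈ Σ₀, π₁(F) > 0} = π₀(E)/π₁(E) > 0, so π₁ is boundedly commensurate to π₀. -/
open MeasureTheory Set ENNReal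

/-- Remark 3: if `π₁` is commensurate to `π₀` and there is a nonempty
`E ∈ Σ₀` with `E ⊆ S₁`, then `π₁ E > 0`, `π₀ E > 0`, for every `F ∈ Σ₀` with `π₁ F > 0`
one has `0 < π₀ E / π₁ E ≤ π₀ F / π₁ F`, the infimum of these ratios equals
`π₀ E / π₁ E > 0`, and hence `π₁` is boundedly commensurate to `π₀`. -/
theorem boundedlyCommensurate_of_measurable_subevent {Ω : Type*} [Countable Ω]
    (m0 m1 : MeasurableSpace Ω) (hle : m0 ≤ m1)
    (π₀ : @Measure Ω m0) (π₁ : @Measure Ω m1)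
    (h₀ : @IsProbabilityMeasure Ω m0 π₀) (h₁ : @IsProbabilityMeasure Ω m1 π₁)
    (hc : Commensurate m0 m1 π₀ π₁)
    (E : Set Ω) (hE : @MeasurableSet Ω m0 E) (hEne : E.Nonempty) (hES : E ⊆ spt m1 π₁) :
    0 < π₁ E ∧ 0 < π₀ E ∧
      (∀ F : Set Ω, @MeasurableSet Ω m0 F → 0 < π₁ F →
        0 < π₀ E / π₁ E ∧ π₀ E / π₁ E ≤ π₀ F / π₁ F) ∧
      (⨅ (F : Set Ω) (_ : @MeasurableSet Ω m0 F ∧ 0 < π₁ F), π₀ F / π₁ F)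
        = π₀ E / π₁ E ∧
      BoundedlyCommensurate m0 m1 π₀ π₁ := by
  have h1 : 0 < π₁ E := by
    rw [pos_iff_ne_zero]
    intro h0
    obtain ⟨x, hx⟩ := hEne
    have h2 : π₁ Eᶜ = 1 := (@prob_compl_eq_one_iff Ω m1 π₁ E h₁ (hle E hE)).2 h0
    have h3 : x ∈ Eᶜ := mem_sInter.1 (hES hx) Eᶜ ⟨(hle E hE).compl, h2⟩
    exact h3 hx
  have h2 : 0 < π₀ E := by
    rw [pos_iff_ne_zero]
    intro h0
    exact h1.ne' ((hc E E hE hE hES).1 h0)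
  have t1 : ∀ F, π₁ F ≠ ∞ := fun F => @measure_ne_top Ω m1 π₁ _ F
  have h3 : 0 < π₀ E / π₁ E := ENNReal.div_pos h2.ne' (t1 E)
  have h4 : ∀ F : Set Ω, @MeasurableSet Ω m0 F → 0 < π₁ F →
      π₀ E / π₁ E ≤ π₀ F / π₁ F := by
    intro F hF hp
    rw [ENNReal.le_div_iff_mul_le (Or.inl hp.ne') (Or.inl (t1 F)), mul_comm, ← mul_div_assoc,
      ENNReal.div_le_iff h1.ne' (t1 E), mul_comm, mul_comm (π₀ F)]
    exact (hc E F hE hF hES).2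
  have h5 : (⨅ (F : Set Ω) (_ : @MeasurableSet Ω m0 F ∧ 0 < π₁ F), π₀ F / π₁ F)
        = π₀ E / π₁ E :=
    le_antisymm (iInf₂_le E ⟨hE, h1⟩) (le_iInf₂ fun F hF => h4 F hF.1 hF.2)
  exact ⟨h1, h2, fun F hF hp => ⟨h3, h4 F hF hp⟩, h5, hc, h5 ▸ h3⟩
end

section
/- Let Σ₀ ⊆ Σ₁ ⊆ … ⊆ Σ_N be increasingly fine σ-algebras on a countable set Ω, and let πₙ be a probability measure on (Ω,Σₙ) with support Sₙ for each n. Suppose for each n ∈ {0,…,N−1}, (πₙ,πₙ₊₁) satisfies extended Bayesianism and πₙ*(Sₙ₊₁) > 0. Then (πₙ,πₘ) satisfies extended Bayesianism for all 0 ≤ n ≤ m ≤ N. Moreover, there exists a probability measure π̄ on (Ω,Σ_N) such that for all n ≤ N, π̄(Sₙ) > 0 and πₙ(E) = π̄(E ∩ Sₙ)/π̄(Sₙ) for all E ∈ Σₙ. -/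
open MeasureTheory Set ENNReal

theorem spt_meas {Ω : Type*} [Countable Ω] (m : MeasurableSpace Ω) (π : @Measure Ω m)
    (hp : @IsProbabilityMeasure Ω m π) :
    @MeasurableSet Ω m (spt m π) ∧ π (spt m π) = 1 := by
  classical
  have key : ∀ x : Ω, ∃ E : Set Ω, @MeasurableSet Ω m E ∧ π E = 1 ∧ (x ∉ spt m π → x ∉ E) := by
    intro x
    by_cases hx : x ∈ spt m π
    · exact ⟨univ, MeasurableSet.univ, measure_univ, fun h => absurd hx h⟩
    · have hx' := hx
      simp only [spt, mem_sInter, mem_setOf_eq, not_forall] at hx'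
      obtain ⟨E, hE, hxE⟩ := hx'
      exact ⟨E, hE.1, hE.2, fun _ => hxE⟩
  choose E hE1 hE2 hE3 using key
  have heq : spt m π = ⋂ x, E x := by
    apply Subset.antisymm
    · intro y hy
      exact mem_iInter.2 fun x => hy (E x) ⟨hE1 x, hE2 x⟩
    · intro y hy
      by_contra h
      exact hE3 y h (mem_iInter.1 hy y)
  rw [heq]
  refine ⟨MeasurableSet.iInter hE1, ?_⟩
  rw [← prob_compl_eq_zero_iff (MeasurableSet.iInter hE1), compl_iInter]
  exact measure_iUnion_null fun x => (prob_compl_eq_zero_iff (hE1 x)).2 (hE2 x)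

theorem exists_ext {Ω : Type*} [Countable Ω] (m0 m1 : MeasurableSpace Ω) (h : m0 ≤ m1)
    (μ : @Measure Ω m0) :
    ∃ ν : @Measure Ω m1, ∀ E : Set Ω, @MeasurableSet Ω m0 E → ν E = μ E := by
  let at0 : Ω → Set Ω := fun x => @measurableAtom Ω m0 x
  let s : Setoid Ω := Setoid.ker at0
  let r : Ω → Ω := fun x => (Quotient.mk s x).out
  have hr : ∀ x, at0 (r x) = at0 x := fun x => Quotient.mk_out (s := s) x
  have hsub : ∀ (E : Set Ω), @MeasurableSet Ω m0 E → ∀ x ∈ E, at0 x ⊆ E := by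
    intro E hE x hx
    exact @measurableAtom_subset Ω m0 E x hE hx
  have hself : ∀ x, x ∈ at0 x := fun x => @mem_measurableAtom_self Ω m0 x
  have hrE : ∀ E : Set Ω, @MeasurableSet Ω m0 E → r ⁻¹' E = E := by
    intro E hE
    ext x
    constructor
    · intro hx
      exact hsub E hE _ hx (by rw [hr]; exact hself x)
    · intro hx
      exact hsub E hE _ hx (by rw [← hr]; exact hself _)
  have hmeas : ∀ A : Set Ω, @MeasurableSet Ω m0 (r ⁻¹' A) := by
    intro A
    have : r ⁻¹' A = ⋃ x ∈ r ⁻¹' A, at0 x := by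
      apply Subset.antisymm
      · intro x hx
        exact mem_biUnion hx (hself x)
      · intro y hy
        obtain ⟨x, hx, hyx⟩ := mem_iUnion₂.1 hy
        have h1 : at0 y = at0 x := by
          first
          | exact (@measurableAtom_eq_of_mem Ω m0 y x hyx)
          | exact (@measurableAtom_eq_of_mem Ω m0 y x hyx).symm
        have h2 : r y = r x := by
          have : Quotient.mk s y = Quotient.mk s x := Quotient.sound (s := s) h1
          simp only [r, this]
        simpa [h2] using hx
    rw [this]
    exact MeasurableSet.biUnion (to_countable _)
      fun x _ => @MeasurableSet.measurableAtom_of_countable Ω m0 _ x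
  have hrm : @Measurable Ω Ω m0 m1 r := fun A _ => hmeas A
  refine ⟨@Measure.map Ω Ω m0 m1 r μ, fun E hE => ?_⟩
  rw [@Measure.map_apply Ω Ω m0 m1 μ r hrm E (h E hE), hrE E hE]

theorem glue {Ω : Type*} [Countable Ω] (m0 m1 M : MeasurableSpace Ω) (h01 : m0 ≤ m1) (h1M : m1 ≤ M)
    (π₀ : @Measure Ω m0) (π₁ ρ : @Measure Ω m1) (σ : @Measure Ω M) (S : Set Ω)
    (hρ : @IsProbabilityMeasure Ω m1 ρ)
    (hS : @MeasurableSet Ω m1 S) (hSp : 0 < ρ S)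
    (hext : ∀ E : Set Ω, @MeasurableSet Ω m0 E → ρ E = π₀ E)
    (hc : ∀ E : Set Ω, @MeasurableSet Ω m1 E → π₁ E = ρ (E ∩ S) / ρ S)
    (hσ : ∀ E : Set Ω, @MeasurableSet Ω m1 E → σ E = π₁ E) :
    ∃ τ : @Measure Ω M, @IsProbabilityMeasure Ω M τ ∧
      (∀ E : Set Ω, @MeasurableSet Ω m0 E → τ E = π₀ E) ∧
      ∀ A : Set Ω, A ⊆ S → τ A = ρ S * σ A := by
  obtain ⟨ν, hν⟩ := exists_ext m1 M h1M (ρ.restrict Sᶜ)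
  have hfin : ρ S ≠ ∞ := measure_ne_top ρ S
  have hval : ∀ E : Set Ω, @MeasurableSet Ω m1 E → (ρ S • σ + ν) E = ρ E := by
    intro E hE
    rw [@Measure.add_apply, @Measure.smul_apply, hν E hE, hσ E hE, hc E hE, smul_eq_mul,
      ENNReal.mul_div_cancel hSp.ne' hfin, Measure.restrict_apply hE]
    exact measure_inter_add_diff E hS
  refine ⟨ρ S • σ + ν, ⟨?_⟩, ?_, ?_⟩
  · rw [hval univ MeasurableSet.univ, measure_univ]
  · intro E hE
    rw [hval E (h01 E hE), hext E hE]
  · intro A hA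
    have h0 : ν S = 0 := by
      rw [hν S hS, Measure.restrict_apply hS]; simp
    have h1 : ν A = 0 := measure_mono_null hA h0
    rw [@Measure.add_apply, @Measure.smul_apply, h1, smul_eq_mul, add_zero]

/-- Theorem 4: for a chain `Σ₀ ⊆ … ⊆ Σ_N` of σ-algebras on a countable
`Ω` with probability measures `πₙ` such that each consecutive pair `(πₙ, πₙ₊₁)` satisfies
extended Bayesianism with `πₙ*(Sₙ₊₁) > 0`, every pair `(πₙ, πₘ)` with `n ≤ m ≤ N`
satisfies extended Bayesianism; moreover there is a single probability measure `π̄` on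
`(Ω, Σ_N)` with `π̄ Sₙ > 0` and `πₙ E = π̄ (E ∩ Sₙ) / π̄ Sₙ` for all `E ∈ Σₙ`, `n ≤ N`. -/
theorem repeated_extendedBayesianism {Ω : Type*} [Countable Ω] (N : ℕ)
    (ms : ℕ → MeasurableSpace Ω)
    (hmono : ∀ n, n < N → ms n ≤ ms (n + 1))
    (π : (n : ℕ) → @Measure Ω (ms n))
    (hprob : ∀ n, n ≤ N → @IsProbabilityMeasure Ω (ms n) (π n))
    (hEB : ∀ n, n < N → ExtendedBayesianism (ms n) (ms (n + 1)) (π n) (π (n + 1)))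
    (hpos : ∀ n, n < N → 0 < outerM (ms n) (π n) (spt (ms (n + 1)) (π (n + 1)))) :
    (∀ n m, n ≤ m → m ≤ N → ExtendedBayesianism (ms n) (ms m) (π n) (π m)) ∧
      ∃ πb : @Measure Ω (ms N), @IsProbabilityMeasure Ω (ms N) πb ∧
        ∀ n, n ≤ N → 0 < πb (spt (ms n) (π n)) ∧
          ∀ E : Set Ω, @MeasurableSet Ω (ms n) E →
            π n E = πb (E ∩ spt (ms n) (π n)) / πb (spt (ms n) (π n)) := by
  have hle : ∀ a b, a ≤ b → b ≤ N → ms a ≤ ms b := by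
    intro a b hab
    induction b, hab using Nat.le_induction with
    | base => intro _; exact le_rfl
    | succ b hab ih => intro hb; exact (ih (by omega)).trans (hmono b (by omega))
  have key : ∀ M, M ≤ N → ∀ d k, k + d = M → ∃ τ : @Measure Ω (ms M),
      @IsProbabilityMeasure Ω (ms M) τ ∧
      (∀ E : Set Ω, @MeasurableSet Ω (ms k) E → τ E = π k E) ∧
      ∀ j, k ≤ j → j ≤ M → 0 < τ (spt (ms j) (π j)) ∧
        ∀ E : Set Ω, @MeasurableSet Ω (ms j) E →
          π j E = τ (E ∩ spt (ms j) (π j)) / τ (spt (ms j) (π j)) := by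
    intro M hM d
    -- the measure itself is a conditional on a support of full measure
    have self : ∀ k, k ≤ M → ∀ τ : @Measure Ω (ms M),
        (∀ E : Set Ω, @MeasurableSet Ω (ms k) E → τ E = π k E) →
        0 < τ (spt (ms k) (π k)) ∧
        ∀ E : Set Ω, @MeasurableSet Ω (ms k) E →
          π k E = τ (E ∩ spt (ms k) (π k)) / τ (spt (ms k) (π k)) := by
      intro k hk τ hτ
      have hp := hprob k (by omega)
      obtain ⟨hS, hS1⟩ := spt_meas (ms k) (π k) hp
      rw [hτ _ hS, hS1]
      refine ⟨zero_lt_one, fun E hE => ?_⟩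
      rw [hτ _ (hE.inter hS), div_one]
      have h0 : π k (spt (ms k) (π k))ᶜ = 0 := (prob_compl_eq_zero_iff hS).2 hS1
      exact (measure_inter_conull h0).symm
    induction d with
    | zero =>
      intro k hk
      obtain rfl : k = M := by omega
      refine ⟨π k, hprob k hM, fun _ _ => rfl, fun j h1 h2 => ?_⟩
      obtain rfl : k = j := by omega
      exact self k le_rfl (π k) fun _ _ => rfl
    | succ d ih =>
      intro k hk
      obtain ⟨σ, hσp, hσe, hσc⟩ := ih (k + 1) (by omega)
      obtain ⟨ρ, hρp, hρe, hρc⟩ := hEB k (by omega)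
      obtain ⟨hρS, hρc⟩ := hρc (hpos k (by omega))
      obtain ⟨hS, hS1⟩ := spt_meas (ms (k + 1)) (π (k + 1)) (hprob _ (by omega))
      obtain ⟨τ, hτp, hτe, hτS⟩ := glue (ms k) (ms (k + 1)) (ms M) (hmono k (by omega))
        (hle _ _ (by omega) hM) (π k) (π (k + 1)) ρ σ _ hρp hS hρS hρe hρc hσe
      refine ⟨τ, hτp, hτe, fun j h1 h2 => ?_⟩
      rcases Nat.eq_or_lt_of_le h1 with rfl | h1
      · exact self k h2 τ hτe
      obtain ⟨hp, hcj⟩ := hσc j h1 h2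
      have hsub : spt (ms j) (π j) ⊆ spt (ms (k + 1)) (π (k + 1)) := by
        have hSj := hle (k + 1) j h1 (by omega) _ hS
        apply sInter_subset_of_mem
        refine ⟨hSj, ?_⟩
        have h0 : σ (spt (ms (k + 1)) (π (k + 1)))ᶜ = 0 :=
          (prob_compl_eq_zero_iff (hle (k + 1) M (by omega) hM _ hS)).2 (by rw [hσe _ hS, hS1])
        rw [hcj _ hSj, inter_comm, measure_inter_conull h0]
        exact ENNReal.div_self hp.ne' (measure_ne_top σ _)
      have hfin : ρ (spt (ms (k + 1)) (π (k + 1))) ≠ ∞ := measure_ne_top ρ _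
      rw [hτS _ hsub]
      refine ⟨ENNReal.mul_pos hρS.ne' hp.ne', fun E hE => ?_⟩
      rw [hτS _ (inter_subset_right.trans hsub), hcj E hE,
        ENNReal.mul_div_mul_left _ _ hρS.ne' hfin]
  constructor
  · intro n m hnm hm
    obtain ⟨τ, h1, h2, h3⟩ := key m hm (m - n) n (by omega)
    exact ⟨τ, h1, h2, fun _ => h3 m hnm le_rfl⟩
  · obtain ⟨τ, h1, h2, h3⟩ := key N le_rfl N 0 (by omega)
    exact ⟨τ, h1, fun n hn => h3 n (Nat.zero_le _) hn⟩
end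

section
/- Let Ω = Ω₀ × Ω₁ be a product of two finite sets, let Σ₀ = {F₀ × Ω₁ : F₀ ⊆ Ω₀} be the σ-algebra of cylinders on the first coordinate, and let Σ₁ be the powerset of Ω. Suppose the support S₁ of π₁ has the form Ω₀ × E₁ with E₁ ⊆ Ω₁, E₁ ≠ ∅ and E₁ ≠ Ω₁. Then S₁ is completely non-measurable (no nonempty subset of S₁ belongs to Σ₀), and (π₀,π₁) satisfies extended Bayesianism (with π₀*(S₁) > 0) if and only if for all F ∈ Σ₀, π₀(F) = 0 implies π₁(F) = 0. -/
open MeasureTheory Set ENNReal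

theorem eb_key {Ω X : Type*} {m1 : MeasurableSpace Ω} {mX : MeasurableSpace X} [Finite X]
    (p : Ω → X) (q : X → Ω) (hp : Measurable p) (hq : Measurable q) (hpq : ∀ x, p (q x) = x)
    (μ0 : Measure X) [IsProbabilityMeasure μ0] (π₁ : Measure Ω) [IsProbabilityMeasure π₁]
    (S : Set Ω) (hS : MeasurableSet S) (hqS : ∀ x, q x ∉ S) (hπS : π₁ Sᶜ = 0)
    (hac : ∀ A, MeasurableSet A → μ0 A = 0 → π₁ (p ⁻¹' A) = 0) :
    ∃ πb : Measure Ω, IsProbabilityMeasure πb ∧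
      (∀ A, MeasurableSet A → πb (p ⁻¹' A) = μ0 A) ∧ 0 < πb S ∧
      ∀ E, MeasurableSet E → π₁ E = πb (E ∩ S) / πb S := by
  classical
  have hfin : ({A : Set X | μ0 A ≠ 0}).Finite := Set.toFinite _
  obtain ⟨A0, hA0, hmin⟩ := Set.exists_min_image {A : Set X | μ0 A ≠ 0} (fun A => μ0 A) hfin
    ⟨Set.univ, by simp⟩
  obtain ⟨ε, hε⟩ : ∃ ε, ε = μ0 A0 := ⟨_, rfl⟩
  have hε0 : ε ≠ 0 := hε ▸ hA0
  have hεt : ε ≠ ⊤ := hε ▸ measure_ne_top μ0 A0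
  have hle : ε • π₁.map p ≤ μ0 := by
    rw [Measure.le_iff]
    intro A hA
    rw [Measure.smul_apply, Measure.map_apply hp hA, smul_eq_mul]
    by_cases h : μ0 A = 0
    · simp [hac A hA h]
    · calc ε * π₁ (p ⁻¹' A) ≤ ε * 1 := by gcongr; exact prob_le_one
        _ ≤ μ0 A := by rw [mul_one, hε]; exact hmin A h
  haveI : IsFiniteMeasure (ε • π₁.map p) := isFiniteMeasure_of_le μ0 hle
  have hcyl : ∀ A, MeasurableSet A →
      (ε • π₁ + (μ0 - ε • π₁.map p).map q) (p ⁻¹' A) = μ0 A := by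
    intro A hA
    have hqa : q ⁻¹' (p ⁻¹' A) = A := by ext x; simp [hpq]
    rw [Measure.add_apply, Measure.map_apply hq (hp hA), hqa]
    conv_rhs => rw [← Measure.sub_add_cancel_of_le hle]
    rw [Measure.add_apply, Measure.smul_apply, Measure.smul_apply, Measure.map_apply hp hA,
      add_comm]
  have hES : ∀ E, MeasurableSet E →
      (ε • π₁ + (μ0 - ε • π₁.map p).map q) (E ∩ S) = ε * π₁ E := by
    intro E hE
    have hqa : q ⁻¹' (E ∩ S) = ∅ := by ext x; simp [hqS]
    rw [Measure.add_apply, Measure.map_apply hq (hE.inter hS), hqa, measure_empty, add_zero,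
      Measure.smul_apply, smul_eq_mul, measure_inter_conull hπS]
  have hSS : (ε • π₁ + (μ0 - ε • π₁.map p).map q) S = ε := by
    have := hES Set.univ MeasurableSet.univ
    simpa only [Set.univ_inter, measure_univ, mul_one] using this
  refine ⟨_, ⟨?_⟩, hcyl, ?_, ?_⟩
  · have := hcyl Set.univ MeasurableSet.univ
    rw [Set.preimage_univ] at this
    exact this.trans measure_univ
  · rw [hSS]; exact pos_iff_ne_zero.2 hε0
  · intro E hE
    rw [hES E hE, hSS, mul_comm, ENNReal.mul_div_cancel_right hε0 hεt]

theorem spt_compl_null {Ω : Type*} [Finite Ω] (m : MeasurableSpace Ω) (π : Measure Ω)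
    [IsProbabilityMeasure π] : π (spt m π)ᶜ = 0 := by
  have hc : ({E : Set Ω | MeasurableSet E ∧ π E = 1}).Countable := (Set.toFinite _).countable
  have : spt m π ∈ ae π := by
    unfold spt
    rw [countable_sInter_mem hc]
    rintro E ⟨hE, h1⟩
    exact (mem_ae_iff_prob_eq_one hE).2 h1
  exact mem_ae_iff.1 this

/-- Example on product spaces: with `Ω = Ω₀ × Ω₁`, `Σ₀` the σ-algebra of
cylinders on the first coordinate and `Σ₁` the powerset, if `S₁ = Ω₀ × E₁` with
`∅ ≠ E₁ ≠ Ω₁`, then `S₁` is completely non-measurable and `(π₀, π₁)` satisfies extended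
Bayesianism (with `π₀*(S₁) > 0`) iff `π₁` is absolutely continuous with respect to `π₀`
on `Σ₀`. -/
theorem product_space_example {Ω₀ Ω₁ : Type*} [Finite Ω₀] [Finite Ω₁]
    (π₀ : @Measure (Ω₀ × Ω₁) (MeasurableSpace.comap Prod.fst ⊤))
    (h₀ : @IsProbabilityMeasure (Ω₀ × Ω₁) (MeasurableSpace.comap Prod.fst ⊤) π₀)
    (π₁ : @Measure (Ω₀ × Ω₁) ⊤)
    (h₁ : @IsProbabilityMeasure (Ω₀ × Ω₁) ⊤ π₁)
    (E₁ : Set Ω₁) (hne : E₁.Nonempty) (hproper : E₁ ≠ Set.univ)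
    (hS : spt ⊤ π₁ = (Set.univ : Set Ω₀) ×ˢ E₁) :
    (∀ F : Set (Ω₀ × Ω₁), F ⊆ spt ⊤ π₁ → F.Nonempty →
        ¬ @MeasurableSet (Ω₀ × Ω₁) (MeasurableSpace.comap Prod.fst ⊤) F) ∧
      ((ExtendedBayesianism (MeasurableSpace.comap Prod.fst ⊤) ⊤ π₀ π₁ ∧
          0 < outerM (MeasurableSpace.comap Prod.fst ⊤) π₀ (spt ⊤ π₁)) ↔
        (∀ F : Set (Ω₀ × Ω₁),
          @MeasurableSet (Ω₀ × Ω₁) (MeasurableSpace.comap Prod.fst ⊤) F →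
          π₀ F = 0 → π₁ F = 0)) := by
  refine ⟨?_, ?_, ?_⟩
  · rintro F hF ⟨x, hx⟩ ⟨A, -, rfl⟩
    apply hproper
    ext y
    have : (x.1, y) ∈ spt ⊤ π₁ := hF (show (x.1, y) ∈ Prod.fst ⁻¹' A from hx)
    rw [hS] at this
    simpa using this
  · rintro ⟨⟨πb, -, h1, h2⟩, hpos⟩ F hF hF0
    obtain ⟨-, h4⟩ := h2 hpos
    rw [h4 F trivial, measure_mono_null Set.inter_subset_left ((h1 F hF).trans hF0),
      ENNReal.zero_div]
  · intro hac
    obtain ⟨e, he⟩ : ∃ e, e ∉ E₁ := by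
      by_contra! h
      exact hproper (Set.eq_univ_of_forall h)
    letI m0 : MeasurableSpace (Ω₀ × Ω₁) := MeasurableSpace.comap Prod.fst ⊤
    have hfst : @Measurable _ _ m0 ⊤ (Prod.fst : Ω₀ × Ω₁ → Ω₀) := fun A _ => ⟨A, trivial, rfl⟩
    have hmap : ∀ A : Set Ω₀, (@Measure.map _ _ m0 ⊤ Prod.fst π₀) A = π₀ (Prod.fst ⁻¹' A) :=
      fun A => @Measure.map_apply _ _ m0 ⊤ π₀ _ hfst A trivial
    have hpr : @IsProbabilityMeasure _ ⊤ (@Measure.map _ _ m0 ⊤ Prod.fst π₀) :=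
      @IsProbabilityMeasure.mk _ ⊤ _ (by rw [hmap, Set.preimage_univ]; exact h₀.measure_univ)
    have hnull := @spt_compl_null _ _ ⊤ π₁ h₁
    obtain ⟨πb, hb1, hb2, hb3, hb4⟩ := @eb_key (Ω₀ × Ω₁) Ω₀ ⊤ ⊤ _ Prod.fst (fun x => (x, e))
      (fun _ _ => trivial) (fun _ _ => trivial) (fun _ => rfl)
      (@Measure.map _ _ m0 ⊤ Prod.fst π₀) hpr π₁ h₁ (spt ⊤ π₁) trivial
      (by intro x; rw [hS]; simpa using he) hnull
      (fun A _ hA => hac _ ⟨A, trivial, rfl⟩ (by rwa [hmap] at hA))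
    refine ⟨⟨πb, hb1, ?_, fun _ => ⟨hb3, hb4⟩⟩, ?_⟩
    · rintro E ⟨A, -, rfl⟩
      rw [hb2 A trivial, hmap]
    · refine lt_of_lt_of_le zero_lt_one (le_iInf₂ ?_)
      rintro F ⟨⟨A, -, rfl⟩, hF⟩
      obtain ⟨e', he'⟩ := hne
      have : (Prod.fst ⁻¹' A : Set (Ω₀ × Ω₁)) = Set.univ := by
        ext x
        have : (x.1, e') ∈ (Prod.fst ⁻¹' A : Set (Ω₀ × Ω₁)) := hF (by rw [hS]; simpa using he')
        simpa using this
      rw [this]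
      exact h₀.measure_univ.ge
end

section
/- Suppose π₁ is commensurate to π₀ and there exists a nonempty E ∈ Σ₀ with E ⊆ S₁; set β = π₀(E)/π₁(E) (which is well defined since π₁(E) > 0). Then for all F, F' ∈ Σ₀ with F ∩ S₁ᶜ = F' ∩ S₁ᶜ, one has π₀(F) − β·π₁(F) = π₀(F') − β·π₁(F'), and this common value is nonnegative. -/
open MeasureTheory Set ENNReal

/-- well-definedness step of Theorem 3: if `π₁` is commensurate to `π₀`
and `E ∈ Σ₀` is nonempty with `E ⊆ S₁`, then with `β = π₀ E / π₁ E` (well defined since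
`π₁ E > 0`), for all `F, F' ∈ Σ₀` with `F ∩ S₁ᶜ = F' ∩ S₁ᶜ` one has
`π₀ F − β·π₁ F = π₀ F' − β·π₁ F'`, and this common value is nonnegative. -/
theorem welldefined_remainder {Ω : Type*} [Countable Ω]
    (m0 m1 : MeasurableSpace Ω) (hle : m0 ≤ m1)
    (π₀ : @Measure Ω m0) (π₁ : @Measure Ω m1)
    (h₀ : @IsProbabilityMeasure Ω m0 π₀) (h₁ : @IsProbabilityMeasure Ω m1 π₁)
    (hc : Commensurate m0 m1 π₀ π₁)
    (E : Set Ω) (hE : @MeasurableSet Ω m0 E) (hEne : E.Nonempty) (hES : E ⊆ spt m1 π₁) :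
    0 < π₁ E ∧
      ∀ F F' : Set Ω, @MeasurableSet Ω m0 F → @MeasurableSet Ω m0 F' →
        F ∩ (spt m1 π₁)ᶜ = F' ∩ (spt m1 π₁)ᶜ →
        (π₀ F).toReal - ((π₀ E).toReal / (π₁ E).toReal) * (π₁ F).toReal
            = (π₀ F').toReal - ((π₀ E).toReal / (π₁ E).toReal) * (π₁ F').toReal ∧
          0 ≤ (π₀ F).toReal - ((π₀ E).toReal / (π₁ E).toReal) * (π₁ F).toReal := by
  have hpos : 0 < π₁ E := by
    rw [pos_iff_ne_zero]
    intro h0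
    obtain ⟨x, hx⟩ := hEne
    have hm : @MeasurableSet Ω m1 E := hle _ hE
    have h1 : π₁ Eᶜ = 1 := (@prob_compl_eq_one_iff Ω m1 π₁ E h₁ hm).2 h0
    exact (Set.mem_sInter.1 (hES hx) Eᶜ ⟨hm.compl, h1⟩) hx
  refine ⟨hpos, ?_⟩
  have fin0 : ∀ A, π₀ A ≠ ∞ := fun A => @measure_ne_top Ω m0 π₀ _ A
  have fin1 : ∀ A, π₁ A ≠ ∞ := fun A => @measure_ne_top Ω m1 π₁ _ A
  have hposR : 0 < (π₁ E).toReal := ENNReal.toReal_pos hpos.ne' (fin1 E)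
  have C2 : ∀ A B : Set Ω, @MeasurableSet Ω m0 A → @MeasurableSet Ω m0 B → A ⊆ spt m1 π₁ →
      (π₀ A).toReal * (π₁ B).toReal ≤ (π₁ A).toReal * (π₀ B).toReal := by
    intro A B hA hB hAS
    rw [← ENNReal.toReal_mul, ← ENNReal.toReal_mul]
    exact ENNReal.toReal_mono (ENNReal.mul_ne_top (fin1 A) (fin0 B)) (hc A B hA hB hAS).2
  have key : ∀ D : Set Ω, @MeasurableSet Ω m0 D → D ⊆ spt m1 π₁ →
      (π₀ D).toReal = ((π₀ E).toReal / (π₁ E).toReal) * (π₁ D).toReal := by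
    intro D hD hDS
    have a := C2 E D hE hD hES
    have b := C2 D E hD hE hDS
    field_simp
    linarith
  have dec : ∀ F F' : Set Ω, @MeasurableSet Ω m0 F → @MeasurableSet Ω m0 F' →
      F ∩ (spt m1 π₁)ᶜ = F' ∩ (spt m1 π₁)ᶜ →
      (π₀ F).toReal - ((π₀ E).toReal / (π₁ E).toReal) * (π₁ F).toReal
        = (π₀ (F ∩ F')).toReal
          - ((π₀ E).toReal / (π₁ E).toReal) * (π₁ (F ∩ F')).toReal := by
    intro F F' hF hF' h
    have hs : F \ F' ⊆ spt m1 π₁ := by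
      rintro x ⟨hx, hx'⟩
      by_contra hn
      have : x ∈ F' ∩ (spt m1 π₁)ᶜ := h ▸ ⟨hx, hn⟩
      exact hx' this.1
    have k := key _ (@MeasurableSet.diff Ω m0 _ _ hF hF') hs
    have e0 := @measure_inter_add_sdiff Ω m0 π₀ F' F hF'
    have e1 := @measure_inter_add_sdiff Ω m1 π₁ F' F (hle _ hF')
    rw [← e0, ← e1, ENNReal.toReal_add (fin0 _) (fin0 _),
      ENNReal.toReal_add (fin1 _) (fin1 _), k]
    ring
  intro F F' hF hF' h
  refine ⟨?_, ?_⟩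
  · rw [dec F F' hF hF' h, dec F' F hF' hF h.symm, Set.inter_comm]
  · have a := C2 E F hE hF hES
    rw [sub_nonneg, div_mul_eq_mul_div, div_le_iff₀ hposR]
    linarith
end
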